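/- (Sklyanin: commutativity of open-chain transfer matrices.) Let H be a complex vector space, let D(u) = Σ_{i,j=1}^n E_{ij} ⊗ d_{ij}(u), d_{ij} : ℂ → End(H), satisfy the operator reflection equation, and let K⁺ : ℂ → M_n(ℂ) satisfy the dual reflection equation. Define the open transfer matrix d(u) = tr(K⁺(u)D(u)) = Σ_{i,j=1}^n (K⁺(u))_{ij}·d_{ji}(u) ∈ End(H). Then [d(u), d(v)] = 0 for all u, v ∈ ℂ outside the finite exceptional set where the required R-matrix inversions fail; it suffices that u−v ∉ {ħ, −ħ}, u+v ∉ {ħ, −ħ}, and u+v ∉ {0, nħ, (n−1)ħ, (n+1)ħ}. -/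

import Mathlib

/-! The operator reflection equation is paired against the dual one through
`⟨A, B⟩ = tr(Aᵀ B)`, with `A` scalar and `B` operator-valued on the two auxiliary spaces.

Write `s = u + v` and `s' = n ħ - s`. The partial transpose `Q` of `P` satisfies `Q² = n Q`, so the
partial transposes of `R(s)` and `R(s')` multiply to `s s'`. In paired form
(`pairing_sandwich`) this says that
`⟨K₁ᵗ(u) R(s') K₂ᵗ(v), D₁(u) R(s) D₂(v)⟩ = s s' d(u) d(v)`,
and exchanging the auxiliary spaces (`pairing_sandwich_swap`) gives
`⟨K₂ᵗ(v) R(s') K₁ᵗ(u), D₂(v) R(s) D₁(u)⟩ = s s' d(v) d(u)`.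
The two left-hand sides agree up to the factor `ħ² - (u - v)²`: by unitarity that factor is
`R(v - u) R(u - v)`, and these two R-matrices can be placed on the left of the two arguments of the
first pairing, moved to the right by the two reflection equations, and removed by unitarity again.
The hypotheses on `u` and `v` make both scalars nonzero. -/

open Matrix
open scoped Kronecker

noncomputable section

/-- The permutation operator `P = Σ_{i,j} E_{ij} ⊗ E_{ji}` on `ℂ^n ⊗ ℂ^n`. -/
def Pmat (n : ℕ) : Matrix (Fin n × Fin n) (Fin n × Fin n) ℂ :=
  fun p q => if p.1 = q.2 ∧ p.2 = q.1 then 1 else 0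

/-- The rational (XXX) R-matrix `R(u) = u·(I⊗I) − ħ·P`. -/
def Rmat (n : ℕ) (hbar u : ℂ) : Matrix (Fin n × Fin n) (Fin n × Fin n) ℂ :=
  u • (1 : Matrix (Fin n × Fin n) (Fin n × Fin n) ℂ) - hbar • Pmat n

/-- The R-matrix viewed as a matrix with entries in `End(H)` (acting as scalars on `H`). -/
def RmatE (n : ℕ) (hbar : ℂ) (H : Type*) [AddCommGroup H] [Module ℂ H] (u : ℂ) :
    Matrix (Fin n × Fin n) (Fin n × Fin n) (Module.End ℂ H) :=
  (Rmat n hbar u).map (algebraMap ℂ (Module.End ℂ H))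

/-- `X₁ = X ⊗ I`: an operator-valued matrix placed on the first auxiliary space. -/
def leg1 {R : Type*} [Semiring R] {n : ℕ} (X : Matrix (Fin n) (Fin n) R) :
    Matrix (Fin n × Fin n) (Fin n × Fin n) R :=
  fun p q => if p.2 = q.2 then X p.1 q.1 else 0

/-- `X₂ = I ⊗ X`: an operator-valued matrix placed on the second auxiliary space. -/
def leg2 {R : Type*} [Semiring R] {n : ℕ} (X : Matrix (Fin n) (Fin n) R) :
    Matrix (Fin n × Fin n) (Fin n × Fin n) R :=
  fun p q => if p.1 = q.1 then X p.2 q.2 else 0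

/-- The RTT relation: `R₁₂(u−v) T₁(u) T₂(v) = T₂(v) T₁(u) R₁₂(u−v)` on `ℂ^n ⊗ ℂ^n ⊗ H`. -/
def RTTrel (n : ℕ) (hbar : ℂ) (H : Type*) [AddCommGroup H] [Module ℂ H]
    (T : ℂ → Matrix (Fin n) (Fin n) (Module.End ℂ H)) : Prop :=
  ∀ u v : ℂ,
    RmatE n hbar H (u - v) * leg1 (T u) * leg2 (T v)
      = leg2 (T v) * leg1 (T u) * RmatE n hbar H (u - v)

/-- The operator reflection equation on `ℂ^n ⊗ ℂ^n ⊗ H`. -/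
def RefEq (n : ℕ) (hbar : ℂ) (H : Type*) [AddCommGroup H] [Module ℂ H]
    (D : ℂ → Matrix (Fin n) (Fin n) (Module.End ℂ H)) : Prop :=
  ∀ u₁ u₂ : ℂ,
    RmatE n hbar H (u₁ - u₂) * leg1 (D u₁) * RmatE n hbar H (u₁ + u₂) * leg2 (D u₂)
      = leg2 (D u₂) * RmatE n hbar H (u₁ + u₂) * leg1 (D u₁) * RmatE n hbar H (u₁ - u₂)


/-- Partial transposition in the first tensor factor: `(A⊗B)^{t₁} = Aᵀ ⊗ B`. -/
def pt1 {n : ℕ} (X : Matrix (Fin n × Fin n) (Fin n × Fin n) ℂ) :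
    Matrix (Fin n × Fin n) (Fin n × Fin n) ℂ :=
  fun p q => X (q.1, p.2) (p.1, q.2)

/-- Partial transposition in the second tensor factor: `(A⊗B)^{t₂} = A ⊗ Bᵀ`. -/
def pt2 {n : ℕ} (X : Matrix (Fin n × Fin n) (Fin n × Fin n) ℂ) :
    Matrix (Fin n × Fin n) (Fin n × Fin n) ℂ :=
  fun p q => X (p.1, q.2) (q.1, p.2)

/-- The dual reflection equation for a scalar matrix `K⁺`. -/
def DualRefEq (n : ℕ) (hbar : ℂ) (Kp : ℂ → Matrix (Fin n) (Fin n) ℂ) : Prop :=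
  ∀ u₁ u₂ : ℂ,
    Rmat n hbar (u₂ - u₁) * pt1 (leg1 (Kp u₁))
        * Rmat n hbar (-u₁ - u₂ + (n : ℂ) * hbar) * pt2 (leg2 (Kp u₂))
      = pt2 (leg2 (Kp u₂)) * Rmat n hbar (-u₁ - u₂ + (n : ℂ) * hbar)
        * pt1 (leg1 (Kp u₁)) * Rmat n hbar (u₂ - u₁)

/-! ### The pairing of scalar and operator-valued matrices -/

/-- The pairing `⟨A, B⟩ = Σ_{p,q} A_{pq} • B_{pq} = tr(Aᵀ B)` of a scalar matrix with a matrix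
over a complex algebra. Since the scalar entries commute with everything, it has the usual
cyclicity properties with respect to scalar matrices. -/
def pairing {N E : Type*} [Fintype N] [Ring E] [Algebra ℂ E]
    (A : Matrix N N ℂ) (B : Matrix N N E) : E :=
  ∑ p, ∑ q, A p q • B p q

theorem pairing_mul_left {N E : Type*} [Fintype N] [Ring E] [Algebra ℂ E]
    (M A : Matrix N N ℂ) (B : Matrix N N E) :
    pairing (M * A) B = pairing A (Mᵀ.map (algebraMap ℂ E) * B) := by
  simp only [pairing, Matrix.mul_apply, Matrix.map_apply, Matrix.transpose_apply,
    Finset.sum_smul, Finset.smul_sum, ← Algebra.smul_def, smul_smul]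
  -- both sides are the sum over `p, q, r` of `M p r * A r q • B p q`
  calc ∑ p, ∑ q, ∑ r, (M p r * A r q) • B p q
      = ∑ p, ∑ r, ∑ q, (M p r * A r q) • B p q :=
        Finset.sum_congr rfl fun p _ => Finset.sum_comm
    _ = ∑ r, ∑ p, ∑ q, (M p r * A r q) • B p q := Finset.sum_comm
    _ = ∑ r, ∑ q, ∑ p, (M p r * A r q) • B p q :=
        Finset.sum_congr rfl fun r _ => Finset.sum_comm
    _ = _ := by simp only [mul_comm]

theorem pairing_mul_right {N E : Type*} [Fintype N] [Ring E] [Algebra ℂ E]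
    (M A : Matrix N N ℂ) (B : Matrix N N E) :
    pairing (A * M) B = pairing A (B * Mᵀ.map (algebraMap ℂ E)) := by
  simp only [pairing, Matrix.mul_apply, Matrix.map_apply, Matrix.transpose_apply,
    Finset.sum_smul, Finset.smul_sum, ← Algebra.commutes, ← Algebra.smul_def, smul_smul]
  exact Finset.sum_congr rfl fun p _ => Finset.sum_comm

theorem pairing_smul_right {N E : Type*} [Fintype N] [Ring E] [Algebra ℂ E]
    (c : ℂ) (A : Matrix N N ℂ) (B : Matrix N N E) :
    pairing A (c • B) = c • pairing A B := by
  simp only [pairing, Matrix.smul_apply, Finset.smul_sum, smul_comm c]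

theorem pairing_submatrix {N E : Type*} [Fintype N] [Ring E] [Algebra ℂ E] (e : N ≃ N)
    (A : Matrix N N ℂ) (B : Matrix N N E) :
    pairing (A.submatrix e e) (B.submatrix e e) = pairing A B := by
  simp only [pairing, Matrix.submatrix_apply]
  rw [Equiv.sum_comp e (fun p => ∑ q, A p (e q) • B p (e q))]
  exact Finset.sum_congr rfl fun p _ => Equiv.sum_comp e (fun q => A p q • B p q)

/-! ### The rational R-matrix -/

theorem map_smul_one {N E : Type*} [Fintype N] [DecidableEq N] [Ring E] [Algebra ℂ E] (c : ℂ) :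
    (c • (1 : Matrix N N ℂ)).map (algebraMap ℂ E) = c • (1 : Matrix N N E) := by
  ext p q
  by_cases hpq : p = q <;> simp [hpq, Algebra.algebraMap_eq_smul_one]

theorem Pmat_transpose (n : ℕ) : (Pmat n)ᵀ = Pmat n := by
  ext p q
  simp only [Pmat, Matrix.transpose_apply]
  congr 1
  exact propext ⟨fun h => ⟨h.2.symm, h.1.symm⟩, fun h => ⟨h.2.symm, h.1.symm⟩⟩

theorem Pmat_mul_self (n : ℕ) : Pmat n * Pmat n = 1 := by
  ext ⟨a, b⟩ ⟨c, d⟩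
  simp [Pmat, Matrix.mul_apply, Fintype.sum_prod_type, Matrix.one_apply, ite_and]

theorem Rmat_transpose (n : ℕ) (hbar u : ℂ) : (Rmat n hbar u)ᵀ = Rmat n hbar u := by
  simp [Rmat, Pmat_transpose]

theorem Rmat_submatrix_swap (n : ℕ) (hbar u : ℂ) :
    (Rmat n hbar u).submatrix (Equiv.prodComm _ _) (Equiv.prodComm _ _) = Rmat n hbar u := by
  ext ⟨a, b⟩ ⟨c, d⟩
  simp [Rmat, Pmat, Matrix.one_apply, and_comm]

/-- Unitarity of the rational R-matrix. -/
theorem Rmat_mul_Rmat_neg (n : ℕ) (hbar x : ℂ) :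
    Rmat n hbar (-x) * Rmat n hbar x = (hbar ^ 2 - x ^ 2) • 1 := by
  simp only [Rmat, sub_mul, mul_sub, smul_mul_assoc, mul_smul_comm, Pmat_mul_self, one_mul,
    mul_one]
  module

/-! ### Crossing -/

theorem leg_sandwich_apply {E : Type*} [Ring E] [Algebra ℂ E] {n : ℕ} (hbar s : ℂ)
    (X Y : Matrix (Fin n) (Fin n) E) (a b c d : Fin n) :
    (leg1 X * (Rmat n hbar s).map (algebraMap ℂ E) * leg2 Y) (a, b) (c, d)
      = s • (X a c * Y b d) - hbar • (if b = c then (X * Y) a d else 0) := by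
  have h : (Rmat n hbar s).map (algebraMap ℂ E)
      = s • (1 : Matrix (Fin n × Fin n) (Fin n × Fin n) E)
        - hbar • (Pmat n).map (algebraMap ℂ E) := by
    rw [Rmat, Matrix.map_sub _ (map_sub _), map_smul_one]
    congr 1
    ext p q
    simp [← Algebra.smul_def]
  rw [h]
  simp only [mul_sub, sub_mul, mul_smul_comm, smul_mul_assoc, mul_one, Matrix.sub_apply,
    Matrix.smul_apply]
  congr 2
  · simp [Matrix.mul_apply, Fintype.sum_prod_type, leg1, leg2]
  · simp [Matrix.mul_apply, Fintype.sum_prod_type, leg1, leg2, Pmat, ite_and,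
      apply_ite (algebraMap ℂ E)]

/-- The operator `tr(K X)`. -/
def trKD {E : Type*} [Ring E] [Algebra ℂ E] {n : ℕ}
    (K : Matrix (Fin n) (Fin n) ℂ) (X : Matrix (Fin n) (Fin n) E) : E :=
  ∑ i, ∑ j, K i j • X j i

/-- Crossing unitarity in paired form. The partial transposes of `R(s)` and `R(s')` multiply to
the scalar `s s'` when `s + s' = n ħ`, which decouples the two auxiliary spaces. -/
theorem pairing_sandwich {E : Type*} [Ring E] [Algebra ℂ E] {n : ℕ} (hbar s s' : ℂ)
    (hs : s + s' = n * hbar)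
    (K L : Matrix (Fin n) (Fin n) ℂ) (X Y : Matrix (Fin n) (Fin n) E) :
    pairing (leg1 Kᵀ * Rmat n hbar s' * leg2 Lᵀ)
        (leg1 X * (Rmat n hbar s).map (algebraMap ℂ E) * leg2 Y)
      = (s * s') • (trKD K X * trKD L Y) := by
  have hR : Rmat n hbar s' = (Rmat n hbar s').map (algebraMap ℂ ℂ) := by
    ext p q
    simp
  rw [hR]
  -- the four terms arising from `R = s - ħ P` on both sides; those with a `P` are multiples of `T`
  set T : E := ∑ a, ∑ d, (L * K) d a • (X * Y) a d with hT
  have e1 : ∑ a, ∑ b, ∑ c, ∑ d, (K c a * L d b) • (X a c * Y b d) = trKD K X * trKD L Y := by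
    have h : ∀ (K : Matrix (Fin n) (Fin n) ℂ) (X : Matrix (Fin n) (Fin n) E),
        trKD K X = ∑ a, ∑ c, K c a • X a c := fun K X => Finset.sum_comm
    simp only [h, Finset.sum_mul_sum, smul_mul_smul_comm]
  have e2 : ∑ a, ∑ b, ∑ c, ∑ d, (K c a * L d b) • (if b = c then (X * Y) a d else 0) = T := by
    simp only [hT, smul_ite, smul_zero, Finset.sum_ite_irrel, Finset.sum_const_zero,
      Finset.sum_ite_eq, Finset.mem_univ, if_true]
    refine Finset.sum_congr rfl fun a _ => ?_
    rw [Finset.sum_comm]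
    simp only [Matrix.mul_apply (M := L) (N := K), Finset.sum_smul, mul_comm]
  have e3 : ∑ a, ∑ b, ∑ c, ∑ d,
      (if b = c then (Kᵀ * Lᵀ) a d else 0) • (X a c * Y b d) = T := by
    simp only [hT, ite_smul, zero_smul, Finset.sum_ite_irrel, Finset.sum_const_zero,
      Finset.sum_ite_eq, Finset.mem_univ, if_true, ← Matrix.transpose_mul,
      Matrix.transpose_apply]
    refine Finset.sum_congr rfl fun a _ => ?_
    rw [Finset.sum_comm]
    simp only [Matrix.mul_apply (M := X) (N := Y), Finset.smul_sum]
  have e4 : ∑ a : Fin n, ∑ b : Fin n, ∑ c : Fin n, ∑ d,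
      (if b = c then (Kᵀ * Lᵀ) a d else 0) • (if b = c then (X * Y) a d else 0)
        = (n : ℂ) • T := by
    have h : ∀ a b c d : Fin n,
        (if b = c then (Kᵀ * Lᵀ) a d else 0) • (if b = c then (X * Y) a d else 0)
          = if b = c then (L * K) d a • (X * Y) a d else 0 := by
      intro a b c d
      rw [← Matrix.transpose_mul, Matrix.transpose_apply]
      split_ifs <;> simp
    simp only [h, hT, Finset.sum_ite_irrel, Finset.sum_const_zero, Finset.sum_ite_eq,
      Finset.mem_univ, if_true, Finset.sum_const, Finset.card_univ, Fintype.card_fin,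
      ← Finset.smul_sum, Nat.cast_smul_eq_nsmul]
  simp only [pairing, Fintype.sum_prod_type, leg_sandwich_apply, smul_eq_mul]
  calc _ = (s * s') • (∑ a, ∑ b, ∑ c, ∑ d, (K c a * L d b) • (X a c * Y b d))
        - (s' * hbar) •
          (∑ a, ∑ b, ∑ c, ∑ d, (K c a * L d b) • (if b = c then (X * Y) a d else 0))
        - (s * hbar) • (∑ a, ∑ b, ∑ c, ∑ d,
          (if b = c then (Kᵀ * Lᵀ) a d else 0) • (X a c * Y b d))
        + (hbar * hbar) • (∑ a : Fin n, ∑ b : Fin n, ∑ c : Fin n, ∑ d,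
          (if b = c then (Kᵀ * Lᵀ) a d else 0) • (if b = c then (X * Y) a d else 0)) := by
        simp only [Finset.smul_sum, ← Finset.sum_sub_distrib, ← Finset.sum_add_distrib]
        refine Finset.sum_congr rfl fun a _ => Finset.sum_congr rfl fun b _ =>
          Finset.sum_congr rfl fun c _ => Finset.sum_congr rfl fun d _ => ?_
        simp only [Matrix.transpose_apply]
        module
    _ = (s * s') • (trKD K X * trKD L Y) := by
        rw [e1, e2, e3, e4]
        have h0 : s' * hbar + s * hbar = hbar * hbar * n := by linear_combination hbar * hs
        have : (s' * hbar) • T + (s * hbar) • T = (hbar * hbar) • (n : ℂ) • T := by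
          rw [← add_smul, h0, mul_smul]
        rw [← this]
        abel

theorem leg1_submatrix_swap {E : Type*} [Ring E] {n : ℕ} (X : Matrix (Fin n) (Fin n) E) :
    (leg1 X).submatrix (Equiv.prodComm _ _) (Equiv.prodComm _ _) = leg2 X := rfl

theorem leg2_submatrix_swap {E : Type*} [Ring E] {n : ℕ} (X : Matrix (Fin n) (Fin n) E) :
    (leg2 X).submatrix (Equiv.prodComm _ _) (Equiv.prodComm _ _) = leg1 X := rfl

/-- The image of `pairing_sandwich` under exchanging the two auxiliary spaces. -/
theorem pairing_sandwich_swap {E : Type*} [Ring E] [Algebra ℂ E] {n : ℕ} (hbar s s' : ℂ)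
    (hs : s + s' = n * hbar)
    (K L : Matrix (Fin n) (Fin n) ℂ) (X Y : Matrix (Fin n) (Fin n) E) :
    pairing (leg2 Kᵀ * Rmat n hbar s' * leg1 Lᵀ)
        (leg2 X * (Rmat n hbar s).map (algebraMap ℂ E) * leg1 Y)
      = (s * s') • (trKD K X * trKD L Y) := by
  rw [← pairing_sandwich hbar s s' hs,
    ← pairing_submatrix (Equiv.prodComm (Fin n) (Fin n)) (leg1 Kᵀ * _ * _)]
  simp only [← Matrix.submatrix_mul_equiv _ _ _ (Equiv.prodComm (Fin n) (Fin n)),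
    leg1_submatrix_swap, leg2_submatrix_swap, Matrix.submatrix_map, Rmat_submatrix_swap]

theorem pt1_leg1 {n : ℕ} (K : Matrix (Fin n) (Fin n) ℂ) : pt1 (leg1 K) = leg1 Kᵀ := rfl

theorem pt2_leg2 {n : ℕ} (K : Matrix (Fin n) (Fin n) ℂ) : pt2 (leg2 K) = leg2 Kᵀ := rfl

/-- Sklyanin: the open-chain transfer matrices
`d(u) = tr(K⁺(u)D(u)) = Σ_{i,j} (K⁺(u))_{ij} d_{ji}(u)` commute
for generic spectral parameters. -/
theorem open_transfer_commute (n : ℕ) (hn : 2 ≤ n) (hbar : ℂ)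
    (H : Type*) [AddCommGroup H] [Module ℂ H]
    (D : ℂ → Matrix (Fin n) (Fin n) (Module.End ℂ H))
    (hD : RefEq n hbar H D)
    (Kp : ℂ → Matrix (Fin n) (Fin n) ℂ)
    (hKp : DualRefEq n hbar Kp)
    (u v : ℂ)
    (h1 : u - v ≠ hbar) (h2 : u - v ≠ -hbar)
    (h3 : u + v ≠ hbar) (h4 : u + v ≠ -hbar)
    (h5 : u + v ≠ 0) (h6 : u + v ≠ (n : ℂ) * hbar)
    (h7 : u + v ≠ ((n : ℂ) - 1) * hbar) (h8 : u + v ≠ ((n : ℂ) + 1) * hbar) :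
    (∑ i : Fin n, ∑ j : Fin n, Kp u i j • D u j i)
        * (∑ i : Fin n, ∑ j : Fin n, Kp v i j • D v j i)
      = (∑ i : Fin n, ∑ j : Fin n, Kp v i j • D v j i)
        * (∑ i : Fin n, ∑ j : Fin n, Kp u i j • D u j i) := by
  change trKD (Kp u) (D u) * trKD (Kp v) (D v) = trKD (Kp v) (D v) * trKD (Kp u) (D u)
  have hs : (u + v) + (-u - v + n * hbar) = n * hbar := by ring
  have hc : (u + v) * (-u - v + n * hbar) ≠ 0 := by
    refine mul_ne_zero h5 fun h => h6 ?_
    linear_combination -h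
  have hr : hbar ^ 2 - (u - v) ^ 2 ≠ 0 := by
    intro h
    have h' : (u - v - hbar) * (u - v - -hbar) = 0 := by linear_combination -h
    rcases mul_eq_zero.1 h' with h' | h'
    · exact h1 (sub_eq_zero.1 h')
    · exact h2 (sub_eq_zero.1 h')
  have hDuv := hD u v
  have hKuv := hKp u v
  rw [pt1_leg1, pt2_leg2] at hKuv
  have hL := pairing_sandwich hbar _ _ hs (Kp u) (Kp v) (D u) (D v)
  have hR := pairing_sandwich_swap hbar _ _ hs (Kp v) (Kp u) (D v) (D u)
  have hU : (Rmat n hbar (v - u)).map (algebraMap ℂ (Module.End ℂ H))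
      * (Rmat n hbar (u - v)).map (algebraMap ℂ (Module.End ℂ H))
      = (hbar ^ 2 - (u - v) ^ 2) • 1 := by
    rw [← Matrix.map_mul, ← neg_sub u v, Rmat_mul_Rmat_neg, map_smul_one]
  have hU' : (Rmat n hbar (u - v)).map (algebraMap ℂ (Module.End ℂ H))
      * (Rmat n hbar (v - u)).map (algebraMap ℂ (Module.End ℂ H))
      = (hbar ^ 2 - (u - v) ^ 2) • 1 := by
    rw [← Matrix.map_mul, ← neg_sub v u, Rmat_mul_Rmat_neg, map_smul_one,
      neg_sq, sub_sq_comm v u]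
  simp only [RmatE] at hDuv
  -- the two sides of the dual reflection equation paired with those of the reflection equation
  have key : (hbar ^ 2 - (u - v) ^ 2) •
        pairing (leg1 (Kp u)ᵀ * Rmat n hbar (-u - v + n * hbar) * leg2 (Kp v)ᵀ)
          (leg1 (D u) * (Rmat n hbar (u + v)).map (algebraMap ℂ (Module.End ℂ H)) * leg2 (D v))
      = (hbar ^ 2 - (u - v) ^ 2) •
        pairing (leg2 (Kp v)ᵀ * Rmat n hbar (-u - v + n * hbar) * leg1 (Kp u)ᵀ)
          (leg2 (D v) * (Rmat n hbar (u + v)).map (algebraMap ℂ (Module.End ℂ H))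
            * leg1 (D u)) := by
    rw [← pairing_smul_right, ← pairing_smul_right]
    calc _ = pairing (Rmat n hbar (v - u) * (leg1 (Kp u)ᵀ
                * Rmat n hbar (-u - v + n * hbar) * leg2 (Kp v)ᵀ))
              ((Rmat n hbar (u - v)).map (algebraMap ℂ (Module.End ℂ H)) * (leg1 (D u)
                * (Rmat n hbar (u + v)).map (algebraMap ℂ (Module.End ℂ H))
                * leg2 (D v))) := by
            rw [pairing_mul_left (Rmat n hbar (v - u)), Rmat_transpose, ← mul_assoc, hU, smul_mul_assoc, one_mul]
      _ = pairing (leg2 (Kp v)ᵀ * Rmat n hbar (-u - v + n * hbar) * leg1 (Kp u)ᵀ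
                * Rmat n hbar (v - u))
              (leg2 (D v) * (Rmat n hbar (u + v)).map (algebraMap ℂ (Module.End ℂ H))
                * leg1 (D u) * (Rmat n hbar (u - v)).map (algebraMap ℂ (Module.End ℂ H))) := by
            rw [← hKuv, ← hDuv]
            simp only [mul_assoc]
      _ = _ := by
            rw [pairing_mul_right (Rmat n hbar (v - u)), Rmat_transpose,
              mul_assoc _ _ (Matrix.map (Rmat n hbar (v - u)) _), hU', mul_smul_comm, mul_one]
  rw [hL, hR] at key
  exact smul_right_injective _ hc (smul_right_injective _ hr key)
end
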